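/- Let γ ∈ (0,1]. There is a constant C depending only on γ with the following property. Let h > 0, F ∈ ℝ³, n̄ a unit vector, and 0 < β⁻ ≤ β⁺. Let P be a tetrahedron and S a Lebesgue-measurable set with P ⊆ S ⊆ [0,h]³, vol(P) ≥ γh³, and F ∈ closure(P). Then for every p ∈ Q₁ and j ∈ {0,1}: |C_T(p)|_{H^j(S)} ≤ C |p|_{H^j(S)}. (This is the stability estimate of Lemma 4.3 / Lemma 4.4 for the extension operator C_T on a subelement containing a tetrahedron of uniformly comparable volume whose closure contains the point F.) -/

import Mathlib

/-!
Everything rests on a reverse pointwise bound (`pointwise_bound`): if `S ⊆ [0,h]³` has volume at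
least `γ h³`, then `q(Y)² h³ ≤ K(γ) ∫_S q²` for every `q ∈ Q₁` and every `Y` in the cube. Of the
tetrahedron `P`, only its volume and the fact that `F` lies in the cube matter.

The bound is a Remez inequality. If `q` is affine in one coordinate, then freezing this coordinate
at a value `v ∈ [0,h]` can increase `|q|` by a factor larger than `1/ε` only on a subset of the cube
of volume at most `4 ε h³` (`volume_bad_le`: the sections of this subset have length at most
`4 ε h`). Freezing the three coordinates at those of `Y` one after the other gives
`|q| ≥ ε³ |q(Y)|` off a set of volume at most `12 ε h³`; for `ε = γ/24` this is half of `γ h³`.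

For `j = 1` the bound is applied to the partial derivatives of `p`, which are in `Q₁`, at `F`. For
`j = 0` the partial derivatives at `F` are difference quotients of values of `p` at points of the
cube, because `p` is affine in each coordinate; this gives `|∇p(F)|² h⁵ ≤ 12 K ∫_S p²`, which is
what is needed since `L² ≤ 3 h²` on the cube. The factor `(β⁻/β⁺ - 1)²` is at most `1`.
-/

open MeasureTheory
open scoped RealInnerProductSpace ENNReal

noncomputable section

abbrev V3 : Type := EuclideanSpace ℝ (Fin 3)

/-- `Q₁`: the space of trilinear polynomials on `ℝ³`. -/
def IsQ1 (p : V3 → ℝ) : Prop :=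
  ∃ a₀ a₁ a₂ a₃ a₄ a₅ a₆ a₇ : ℝ, ∀ x : V3,
    p x = a₀ + a₁ * x 0 + a₂ * x 1 + a₃ * x 2
      + a₄ * (x 0 * x 1) + a₅ * (x 0 * x 2) + a₆ * (x 1 * x 2)
      + a₇ * (x 0 * x 1 * x 2)

/-- The cube `T = [0,h]³`. -/
def cube (h : ℝ) : Set V3 := {X | ∀ i, X i ∈ Set.Icc (0:ℝ) h}

/-- `P` is a tetrahedron: the convex hull of four affinely independent points. -/
def IsTetra (P : Set V3) : Prop :=
  ∃ v : Fin 4 → V3, AffineIndependent ℝ v ∧ P = convexHull ℝ (Set.range v)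

/-- The extension operator `C_T(p) = p + (β⁻/β⁺ − 1)(∇p(F)·n̄) L`, `L(X) = (X−F)·n̄`. -/
def CT (βm βp : ℝ) (F nbar : V3) (p : V3 → ℝ) : V3 → ℝ :=
  fun X => p X + (βm / βp - 1) * (fderiv ℝ p F nbar) * ⟪X - F, nbar⟫

/-- `f` is a closed face of the cube `[0,h]³` with unit normal `nf`. -/
def IsFace (h : ℝ) (f : Set V3) (nf : V3) : Prop :=
  ∃ i : Fin 3, (nf = EuclideanSpace.single i 1 ∨ nf = -EuclideanSpace.single i 1) ∧
    (f = {X ∈ cube h | X i = 0} ∨ f = {X ∈ cube h | X i = h})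

/-! ### Coordinate updates and the cube -/

/-- The point `x` with its `i`-th coordinate replaced by `t`. -/
def upd (x : V3) (i : Fin 3) (t : ℝ) : V3 := WithLp.toLp 2 (Function.update x.ofLp i t)

lemma continuous_upd (i : Fin 3) (t : ℝ) : Continuous fun x : V3 => upd x i t := by
  unfold upd
  fun_prop

lemma upd_mem_cube {h : ℝ} {x : V3} (hx : x ∈ cube h) (i : Fin 3) {t : ℝ}
    (ht : t ∈ Set.Icc 0 h) : upd x i t ∈ cube h := by
  intro j
  by_cases hj : j = i
  · subst hj; simpa [upd] using ht
  · simpa [upd, hj] using hx j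

lemma cube_eq_preimage (h : ℝ) :
    cube h = (WithLp.ofLp : V3 → Fin 3 → ℝ) ⁻¹' Set.Icc 0 (fun _ => h) := by
  ext x
  simp only [cube, Set.mem_ofPred_eq, Set.mem_Icc, Set.mem_preimage, Pi.le_def, Pi.zero_apply]
  exact forall_and

lemma volume_cube {h : ℝ} : volume (cube h) = ENNReal.ofReal h ^ 3 := by
  rw [cube_eq_preimage, (PiLp.volume_preserving_ofLp (Fin 3)).measure_preimage
    measurableSet_Icc.nullMeasurableSet, Real.volume_Icc_pi]
  simp

lemma isCompact_cube (h : ℝ) : IsCompact (cube h) := by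
  have e : cube h = WithLp.toLp 2 '' (Set.Icc (0 : Fin 3 → ℝ) (fun _ => h)) := by
    rw [cube_eq_preimage]
    ext x
    constructor
    · intro hx; exact ⟨x.ofLp, hx, rfl⟩
    · rintro ⟨y, hy, rfl⟩; exact hy
  rw [e]
  exact isCompact_Icc.image (PiLp.continuous_toLp 2 _)

/-! ### A Remez inequality in one coordinate -/

/-- Fubini: a subset of the cube whose sections parallel to the `i`-th axis all have length at
most `c` has volume at most `c * h ^ 2`. -/
lemma volume_le_of_slices (i : Fin 3) (c : ℝ≥0∞) (h : ℝ) (B : Set V3) (hB : MeasurableSet B)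
    (hBc : B ⊆ cube h)
    (hs : ∀ y : Fin 2 → ℝ, volume {t : ℝ | WithLp.toLp 2 (i.insertNth t y) ∈ B} ≤ c) :
    volume B ≤ c * ENNReal.ofReal h ^ 2 := by
  set B' : Set (Fin 3 → ℝ) := WithLp.toLp 2 ⁻¹' B with hB'
  have hB'm : MeasurableSet B' := (PiLp.volume_preserving_toLp (Fin 3)).measurable hB
  rw [← (PiLp.volume_preserving_toLp (Fin 3)).measure_preimage hB.nullMeasurableSet,
    ← (volume_preserving_piFinSuccAbove (fun _ : Fin 3 => ℝ) i).symm.measure_preimage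
      hB'm.nullMeasurableSet]
  have hm := (volume_preserving_piFinSuccAbove (fun _ : Fin 3 => ℝ) i).symm.measurable hB'm
  rw [show (volume : Measure (ℝ × (Fin 2 → ℝ))) = volume.prod volume from rfl,
    Measure.prod_apply_symm hm]
  calc ∫⁻ y : Fin 2 → ℝ, volume ((fun t : ℝ => (t, y)) ⁻¹'
          ((MeasurableEquiv.piFinSuccAbove (fun _ : Fin 3 => ℝ) i).symm ⁻¹' B'))
      ≤ ∫⁻ y : Fin 2 → ℝ, (Set.Icc (0 : Fin 2 → ℝ) (fun _ => h)).indicator (fun _ => c) y := by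
        refine lintegral_mono fun y => ?_
        by_cases hy : y ∈ Set.Icc (0 : Fin 2 → ℝ) (fun _ => h)
        · rw [Set.indicator_of_mem hy]
          exact hs y
        · rw [Set.indicator_of_notMem hy, nonpos_iff_eq_zero]
          convert measure_empty (μ := (volume : Measure ℝ))
          refine Set.eq_empty_of_forall_notMem fun t ht => hy ?_
          have h1 : WithLp.toLp 2 (i.insertNth t y : Fin 3 → ℝ) ∈ cube h := hBc ht
          refine ⟨fun j => ?_, fun j => ?_⟩
          · simpa using (h1 (i.succAbove j)).1
          · simpa using (h1 (i.succAbove j)).2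
    _ = c * ENNReal.ofReal h ^ 2 := by
        rw [lintegral_indicator measurableSet_Icc, setLIntegral_const, Real.volume_Icc_pi]
        simp

/-- One-variable Remez estimate, integrated over the other two variables: where `f` is affine in
the `i`-th coordinate, replacing that coordinate by `v` increases `|f|` by a factor larger than
`1 / ε` only on a small part of the cube. -/
lemma volume_bad_le {f : V3 → ℝ} (hf : Continuous f) (i : Fin 3) {v h ε : ℝ} (hh : 0 < h)
    (hε : 0 < ε) (hε2 : ε ≤ 1 / 2) (hv : v ∈ Set.Icc 0 h) (g : V3 → ℝ)
    (hs : ∀ x s t, f (upd x i s) - f (upd x i t) = (s - t) * g x) :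
    volume {x | x ∈ cube h ∧ |f x| < ε * |f (upd x i v)|} ≤ ENNReal.ofReal (4 * ε * h ^ 3) := by
  have hm : MeasurableSet {x | x ∈ cube h ∧ |f x| < ε * |f (upd x i v)|} :=
    (isCompact_cube h).measurableSet.inter (isOpen_lt (by fun_prop)
      (continuous_const.mul (hf.comp (continuous_upd i v)).abs)).measurableSet
  refine (volume_le_of_slices i (ENNReal.ofReal (4 * ε * h)) h _ hm (fun x hx => hx.1)
    fun y => ?_).trans (le_of_eq ?_)
  · refine (Real.volume_le_diam _).trans (Metric.ediam_le ?_)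
    rintro s ⟨hs1, hs2⟩ t ⟨ht1, ht2⟩
    rw [edist_dist, Real.dist_eq]
    apply ENNReal.ofReal_le_ofReal
    set X : V3 := WithLp.toLp 2 (i.insertNth s y) with hX
    have eu : ∀ r r' : ℝ, upd (WithLp.toLp 2 (i.insertNth r y)) i r'
        = WithLp.toLp 2 (i.insertNth r' y) := by
      intro r r'; simp [upd]
    have es : upd X i s = WithLp.toLp 2 (i.insertNth s y) := eu s s
    have et : upd X i t = WithLp.toLp 2 (i.insertNth t y) := eu s t
    have ev : upd (WithLp.toLp 2 (i.insertNth t y)) i v = upd X i v := by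
      rw [eu, hX, eu]
    rw [← et, et, ev, ← et] at ht2
    have eX : X = upd X i s := by rw [es]
    have h1 := hs X s t
    have h2 := hs X v s
    rw [← eX] at h1 h2
    -- If `|f|` is small at `s` but `W` at `v`, the slope is at least `W / (2 h)`; if it is small at
    -- both `s` and `t`, then `|s - t|` times the slope is at most `2 ε W`.
    have hXi : X i = s := by simp [hX]
    have hsI : s ∈ Set.Icc 0 h := hXi ▸ hs1 i
    have hvs : |v - s| ≤ h := abs_le.2 ⟨by linarith [hv.1, hsI.2], by linarith [hv.2, hsI.1]⟩
    have hW : |f (upd X i v)| > 0 := by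
      by_contra hc
      have : |f (upd X i v)| = 0 := le_antisymm (not_lt.1 hc) (abs_nonneg _)
      rw [this, mul_zero] at hs2
      exact absurd hs2 (not_lt.2 (abs_nonneg _))
    set W := |f (upd X i v)|
    have h3 : |s - t| * |g X| ≤ 2 * ε * W := by
      rw [← abs_mul, ← h1]
      linarith [abs_sub (f X) (f (upd X i t))]
    have h4 : W / 2 ≤ h * |g X| := by
      have h5 : |f (upd X i v) - f X| ≤ h * |g X| := by
        rw [h2, abs_mul]
        exact mul_le_mul_of_nonneg_right hvs (abs_nonneg _)
      have h6 : W - |f X| ≤ |f (upd X i v) - f X| := abs_sub_abs_le_abs_sub _ _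
      nlinarith
    have h7 : |s - t| * (W / 2) ≤ |s - t| * (h * |g X|) :=
      mul_le_mul_of_nonneg_left h4 (abs_nonneg _)
    have h8 : h * (|s - t| * |g X|) ≤ h * (2 * ε * W) := mul_le_mul_of_nonneg_left h3 hh.le
    have h9 : |s - t| * W ≤ (4 * ε * h) * W := by nlinarith
    exact le_of_mul_le_mul_right h9 hW
  · rw [← ENNReal.ofReal_pow hh.le, ← ENNReal.ofReal_mul (by positivity)]
    congr 1; ring

/-! ### The reverse pointwise bound -/

/-- The function `p` is affine in each coordinate, with `g i` as its slope in the `i`-th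
coordinate; `g i x` is then the partial derivative of `p` at `x`. -/
def MultiAffine (p : V3 → ℝ) (g : Fin 3 → V3 → ℝ) : Prop :=
  ∀ i x s t, p (upd x i s) - p (upd x i t) = (s - t) * g i x

lemma upd_comm {i j : Fin 3} (hij : i ≠ j) (x : V3) (s t : ℝ) :
    upd (upd x i s) j t = upd (upd x j t) i s := by
  simp only [upd]
  rw [Function.update_comm hij]

/-- Reverse pointwise bound for functions affine in each coordinate, such as members of `Q₁`: the
value of `p` at any point of the cube is controlled by the `L²` norm of `p` on any measurable part
of the cube having volume at least `γ h³`. -/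
lemma pointwise_bound {γ : ℝ} (hγ : 0 < γ) (hγ1 : γ ≤ 1) {h : ℝ} (hh : 0 < h) {S : Set V3}
    (hS : MeasurableSet S) (hSc : S ⊆ cube h) (hvol : ENNReal.ofReal (γ * h ^ 3) ≤ volume S)
    {p : V3 → ℝ} (hp : Continuous p) {g : Fin 3 → V3 → ℝ} (hg : MultiAffine p g)
    {Y : V3} (hY : Y ∈ cube h) :
    p Y ^ 2 * h ^ 3 ≤ 2 / (γ * (γ / 24) ^ 6) * ∫ X in S, p X ^ 2 := by
  -- With this `ε` the three exceptional sets together fill at most half of the volume `γ h³`.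
  set ε : ℝ := γ / 24 with hε
  have hε0 : 0 < ε := by positivity
  have hε2 : ε ≤ 1 / 2 := by rw [hε]; linarith
  -- `p₂` and `p₁` arise from `p` by freezing the last one and the last two coordinates
  -- at those of `Y`.
  set p₂ : V3 → ℝ := fun x => p (upd x 2 (Y 2)) with hp₂
  set p₁ : V3 → ℝ := fun x => p₂ (upd x 1 (Y 1)) with hp₁
  have c₂ : Continuous p₂ := hp.comp (continuous_upd _ _)
  have c₁ : Continuous p₁ := c₂.comp (continuous_upd _ _)
  have e₀ : ∀ x, p₁ (upd x 0 (Y 0)) = p Y := by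
    intro x
    simp only [hp₁, hp₂]
    congr 1
    ext j
    fin_cases j <;> simp [upd]
  set B₂ := {x | x ∈ cube h ∧ |p x| < ε * |p (upd x 2 (Y 2))|} with hB₂
  set B₁ := {x | x ∈ cube h ∧ |p₂ x| < ε * |p₂ (upd x 1 (Y 1))|} with hB₁
  set B₀ := {x | x ∈ cube h ∧ |p₁ x| < ε * |p₁ (upd x 0 (Y 0))|} with hB₀
  have b₂ : volume B₂ ≤ ENNReal.ofReal (4 * ε * h ^ 3) :=
    volume_bad_le hp 2 hh hε0 hε2 (hY 2) (g 2) (hg 2)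
  have b₁ : volume B₁ ≤ ENNReal.ofReal (4 * ε * h ^ 3) := by
    refine volume_bad_le c₂ 1 hh hε0 hε2 (hY 1) (fun x => g 1 (upd x 2 (Y 2))) fun x s t => ?_
    simp only [hp₂]
    rw [upd_comm (by decide), upd_comm (by decide) x t, hg]
  have b₀ : volume B₀ ≤ ENNReal.ofReal (4 * ε * h ^ 3) := by
    refine volume_bad_le c₁ 0 hh hε0 hε2 (hY 0)
      (fun x => g 0 (upd (upd x 1 (Y 1)) 2 (Y 2))) fun x s t => ?_
    simp only [hp₁, hp₂]
    rw [upd_comm (by decide : (0 : Fin 3) ≠ 1) x s, upd_comm (by decide : (0 : Fin 3) ≠ 1) x t,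
      upd_comm (by decide : (0 : Fin 3) ≠ 2), upd_comm (by decide : (0 : Fin 3) ≠ 2) _ t, hg]
  set G := {x | x ∈ S ∧ ε ^ 3 * |p Y| ≤ |p x|} with hG
  have hGm : MeasurableSet G :=
    hS.inter (isClosed_le continuous_const hp.abs).measurableSet
  have hcov : S ⊆ G ∪ (B₂ ∪ (B₁ ∪ B₀)) := by
    intro x hx
    by_contra hc
    simp only [Set.mem_union, not_or] at hc
    obtain ⟨n, n₂, n₁, n₀⟩ := hc
    have hxc := hSc hx
    have m₂ : ε * |p₂ x| ≤ |p x| := not_lt.1 fun hl => n₂ ⟨hxc, hl⟩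
    have m₁ : ε * |p₁ x| ≤ |p₂ x| := not_lt.1 fun hl => n₁ ⟨hxc, hl⟩
    have m₀ : ε * |p Y| ≤ |p₁ x| := by
      have : ε * |p₁ (upd x 0 (Y 0))| ≤ |p₁ x| := not_lt.1 fun hl => n₀ ⟨hxc, hl⟩
      rwa [e₀] at this
    refine n ⟨hx, ?_⟩
    calc ε ^ 3 * |p Y| = ε * (ε * (ε * |p Y|)) := by ring
      _ ≤ ε * (ε * |p₁ x|) := by gcongr
      _ ≤ ε * |p₂ x| := by gcongr
      _ ≤ |p x| := m₂
  have hfinc : volume (cube h) ≠ ⊤ := (isCompact_cube h).measure_ne_top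
  have hGfin : volume G ≠ ⊤ := measure_ne_top_of_subset (fun x hx => hSc hx.1) hfinc
  have hGvol : γ / 2 * h ^ 3 ≤ volume.real G := by
    have h1 : ENNReal.ofReal (γ * h ^ 3) ≤ volume G + ENNReal.ofReal (γ / 2 * h ^ 3) := by
      calc ENNReal.ofReal (γ * h ^ 3) ≤ volume S := hvol
        _ ≤ volume (G ∪ (B₂ ∪ (B₁ ∪ B₀))) := measure_mono hcov
        _ ≤ volume G + (volume B₂ + (volume B₁ + volume B₀)) :=
          (measure_union_le _ _).trans (add_le_add le_rfl ((measure_union_le _ _).trans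
            (add_le_add le_rfl (measure_union_le _ _))))
        _ ≤ volume G + (ENNReal.ofReal (4 * ε * h ^ 3) + (ENNReal.ofReal (4 * ε * h ^ 3)
            + ENNReal.ofReal (4 * ε * h ^ 3))) := by gcongr
        _ = volume G + ENNReal.ofReal (γ / 2 * h ^ 3) := by
          rw [← ENNReal.ofReal_add (by positivity) (by positivity),
            ← ENNReal.ofReal_add (by positivity) (by positivity)]
          congr 2
          rw [hε]; ring
    rw [← ENNReal.ofReal_toReal hGfin, ← ENNReal.ofReal_add ENNReal.toReal_nonneg (by positivity),
      ENNReal.ofReal_le_ofReal_iff (add_nonneg ENNReal.toReal_nonneg (by positivity))] at h1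
    change γ / 2 * h ^ 3 ≤ (volume G).toReal
    linarith
  have hint : IntegrableOn (fun x => p x ^ 2) S :=
    ((hp.pow 2).continuousOn.integrableOn_compact (isCompact_cube h)).mono_set hSc
  have k1 : volume.real G • (ε ^ 3 * |p Y|) ^ 2 ≤ ∫ x in G, p x ^ 2 := by
    refine setIntegral_ge_of_const_le hGm hGfin (fun x hx => ?_)
      (hint.mono_set fun x hx => hx.1)
    rw [← sq_abs (p x)]
    exact pow_le_pow_left₀ (by positivity) hx.2 2
  have k2 : ∫ x in G, p x ^ 2 ≤ ∫ x in S, p x ^ 2 :=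
    setIntegral_mono_set hint (Filter.Eventually.of_forall fun x => sq_nonneg _)
      (Filter.Eventually.of_forall fun x hx => hx.1)
  have k3 : (γ / 2 * h ^ 3) * (ε ^ 6 * p Y ^ 2) ≤ ∫ x in S, p x ^ 2 := by
    refine le_trans ?_ (k1.trans k2)
    rw [smul_eq_mul, mul_pow, sq_abs, ← pow_mul]
    exact mul_le_mul_of_nonneg_right hGvol (by positivity)
  rw [div_mul_eq_mul_div, le_div_iff₀ (by positivity)]
  linarith

/-! ### Gradients of trilinear polynomials and the stability estimate -/

/-- The structure of `Q₁` used below: a member is affine in each coordinate, its partial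
derivatives are its slopes, and these lie in `Q₁` again. -/
lemma IsQ1.exists_grad {p : V3 → ℝ} (hp : IsQ1 p) :
    ∃ g : Fin 3 → V3 → ℝ, MultiAffine p g ∧ (∀ i, IsQ1 (g i)) ∧
      ∀ x, HasFDerivAt p (innerSL ℝ (WithLp.toLp 2 (fun i => g i x) : V3)) x := by
  obtain ⟨a₀, a₁, a₂, a₃, a₄, a₅, a₆, a₇, hp⟩ := hp
  refine ⟨![fun x => a₁ + a₄ * x 1 + a₅ * x 2 + a₇ * (x 1 * x 2),
    fun x => a₂ + a₄ * x 0 + a₆ * x 2 + a₇ * (x 0 * x 2),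
    fun x => a₃ + a₅ * x 0 + a₆ * x 1 + a₇ * (x 0 * x 1)], ?_, ?_, ?_⟩
  · intro i x s t
    rw [hp, hp]
    fin_cases i <;> simp [upd] <;> ring
  · intro i
    fin_cases i
    · exact ⟨a₁, 0, a₄, a₅, 0, 0, a₇, 0, fun x => by simp⟩
    · exact ⟨a₂, a₄, 0, a₆, 0, a₇, 0, 0, fun x => by simp⟩
    · exact ⟨a₃, a₅, a₆, 0, a₇, 0, 0, 0, fun x => by simp⟩
  · intro x
    have hc : ∀ i : Fin 3, HasFDerivAt (fun y : V3 => y i)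
        (EuclideanSpace.proj i : V3 →L[ℝ] ℝ) x := fun i =>
      (EuclideanSpace.proj i : V3 →L[ℝ] ℝ).hasFDerivAt
    have hd := ((((((((hasFDerivAt_const a₀ x).add ((hc 0).const_mul a₁)).add
      ((hc 1).const_mul a₂)).add ((hc 2).const_mul a₃)).add
      (((hc 0).mul (hc 1)).const_mul a₄)).add (((hc 0).mul (hc 2)).const_mul a₅)).add
      (((hc 1).mul (hc 2)).const_mul a₆)).add ((((hc 0).mul (hc 1)).mul (hc 2)).const_mul a₇))
    refine (hd.congr_of_eventuallyEq (Filter.Eventually.of_forall hp)).congr_fderiv ?_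
    refine ContinuousLinearMap.ext fun v => ?_
    simp [PiLp.inner_apply, Fin.sum_univ_three]
    ring

lemma IsQ1.continuous {p : V3 → ℝ} (hp : IsQ1 p) : Continuous p := by
  obtain ⟨g, -, -, hd⟩ := hp.exists_grad
  exact continuous_iff_continuousAt.2 fun x => (hd x).continuousAt

/-- Stability estimate of Lemmas 4.3/4.4 for the extension operator `C_T` on a subelement `S`
containing a tetrahedron of uniformly comparable volume whose closure contains the point `F`:
`|C_T(p)|_{H^j(S)} ≤ C |p|_{H^j(S)}` for `j = 0, 1` (the two conjuncts below). -/
theorem CT_stability (γ : ℝ) (hγ0 : 0 < γ) (hγ1 : γ ≤ 1) :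
    ∃ C : ℝ, 0 < C ∧
      ∀ (h : ℝ), 0 < h →
      ∀ (F nbar : V3), ‖nbar‖ = 1 →
      ∀ (βm βp : ℝ), 0 < βm → βm ≤ βp →
      ∀ (P S : Set V3), IsTetra P → MeasurableSet S → P ⊆ S → S ⊆ cube h →
        ENNReal.ofReal (γ * h ^ 3) ≤ volume P → F ∈ closure P →
      ∀ p : V3 → ℝ, IsQ1 p →
        Real.sqrt (∫ X in S, (CT βm βp F nbar p X) ^ 2) ≤
            C * Real.sqrt (∫ X in S, (p X) ^ 2) ∧
        Real.sqrt (∫ X in S, ‖fderiv ℝ (CT βm βp F nbar p) X‖ ^ 2) ≤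
            C * Real.sqrt (∫ X in S, ‖fderiv ℝ p X‖ ^ 2) := by
  set K : ℝ := 2 / (γ * (γ / 24) ^ 6) with hK
  have hK0 : 0 < K := by positivity
  refine ⟨Real.sqrt (2 + 72 * K), by positivity, ?_⟩
  intro h hh F nbar hn βm βp hm hmp P S hP hS hPS hSc hvolP hFP p hp
  have hvol : ENNReal.ofReal (γ * h ^ 3) ≤ volume S := hvolP.trans (measure_mono hPS)
  have hF : F ∈ cube h :=
    closure_minimal (hPS.trans hSc) (isCompact_cube h).isClosed hFP
  obtain ⟨g, hg, hgQ, hgd⟩ := hp.exists_grad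
  have hcp := hp.continuous
  have hcg : ∀ i, Continuous (g i) := fun i => (hgQ i).continuous
  have hnorm : ∀ x, ‖fderiv ℝ p x‖ ^ 2 = ∑ i, g i x ^ 2 := by
    intro x
    rw [(hgd x).fderiv, innerSL_apply_norm, EuclideanSpace.norm_sq_eq]
    simp
  have hSfin : volume S ≠ ⊤ := measure_ne_top_of_subset hSc (isCompact_cube h).measure_ne_top
  have hSvol : volume.real S ≤ h ^ 3 := by
    refine ENNReal.toReal_le_of_le_ofReal (by positivity) ?_
    rw [ENNReal.ofReal_pow hh.le, ← volume_cube]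
    exact measure_mono hSc
  have hintc : ∀ f : V3 → ℝ, Continuous f → IntegrableOn f S := fun f hf =>
    (hf.continuousOn.integrableOn_compact (isCompact_cube h)).mono_set hSc
  set D : ℝ := (βm / βp - 1) * (fderiv ℝ p F nbar) with hD
  have hβp : 0 < βp := hm.trans_le hmp
  have hD2 : D ^ 2 ≤ ∑ i, g i F ^ 2 := by
    rw [← hnorm, hD, mul_pow]
    have h1 : (fderiv ℝ p F nbar) ^ 2 ≤ ‖fderiv ℝ p F‖ ^ 2 := by
      have := (fderiv ℝ p F).le_opNorm nbar
      rw [hn, mul_one, Real.norm_eq_abs] at this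
      rw [← sq_abs (fderiv ℝ p F nbar)]
      exact pow_le_pow_left₀ (abs_nonneg _) this 2
    have h2 : (βm / βp - 1) ^ 2 ≤ 1 := by
      have : 0 < βm / βp := by positivity
      have : βm / βp ≤ 1 := (div_le_one hβp).2 hmp
      nlinarith
    nlinarith [sq_nonneg (fderiv ℝ p F nbar)]
  have hCTe : CT βm βp F nbar p = fun X => p X + D * ⟪X - F, nbar⟫ := rfl
  have key : ∀ a b : ℝ, 0 ≤ b → a ≤ (2 + 72 * K) * b →
      Real.sqrt a ≤ Real.sqrt (2 + 72 * K) * Real.sqrt b := by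
    intro a b hb hab
    rw [← Real.sqrt_mul (by positivity)]
    exact Real.sqrt_le_sqrt hab
  constructor
  · set I := ∫ X in S, p X ^ 2 with hI
    have hI0 : 0 ≤ I := integral_nonneg fun _ => sq_nonneg _
    refine key _ _ hI0 ?_
    -- As `p` is affine along each edge direction, its partial derivative at `F` is exactly a
    -- difference quotient between two opposite faces of the cube.
    have hgi : ∀ i, g i F ^ 2 * h ^ 5 ≤ 4 * K * I := by
      intro i
      have e := hg i F h 0
      have q1 := pointwise_bound hγ0 hγ1 hh hS hSc hvol hcp hg
        (upd_mem_cube hF i (t := h) ⟨hh.le, le_rfl⟩)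
      have q2 := pointwise_bound hγ0 hγ1 hh hS hSc hvol hcp hg
        (upd_mem_cube hF i (t := 0) ⟨le_rfl, hh.le⟩)
      rw [← hK, ← hI] at q1 q2
      have e2 : g i F ^ 2 * h ^ 5 = (p (upd F i h) - p (upd F i 0)) ^ 2 * h ^ 3 := by
        rw [e]; ring
      rw [e2]
      have e3 : (p (upd F i h) - p (upd F i 0)) ^ 2
          ≤ 2 * p (upd F i h) ^ 2 + 2 * p (upd F i 0) ^ 2 := by
        nlinarith [sq_nonneg (p (upd F i h) + p (upd F i 0))]
      have e4 := mul_le_mul_of_nonneg_right e3 (by positivity : 0 ≤ h ^ 3)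
      nlinarith
    have hD5 : D ^ 2 * h ^ 5 ≤ 12 * K * I := by
      have := mul_le_mul_of_nonneg_right hD2 (by positivity : 0 ≤ h ^ 5)
      rw [Fin.sum_univ_three] at this
      nlinarith [hgi 0, hgi 1, hgi 2]
    have hL : ∀ X ∈ S, ⟪X - F, nbar⟫ ^ 2 ≤ 3 * h ^ 2 := by
      intro X hX
      have h1 : ⟪X - F, nbar⟫ ^ 2 ≤ ‖X - F‖ ^ 2 := by
        have := abs_real_inner_le_norm (X - F) nbar
        rw [hn, mul_one] at this
        rw [← sq_abs]
        exact pow_le_pow_left₀ (abs_nonneg _) this 2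
      refine h1.trans ?_
      rw [EuclideanSpace.norm_sq_eq, Fin.sum_univ_three]
      have h2 : ∀ i, ‖(X - F) i‖ ^ 2 ≤ h ^ 2 := by
        intro i
        have x1 := hSc hX i
        have x2 := hF i
        refine pow_le_pow_left₀ (norm_nonneg _) ?_ 2
        rw [Real.norm_eq_abs, PiLp.sub_apply]
        exact abs_le.2 ⟨by linarith [x1.1, x2.2], by linarith [x1.2, x2.1]⟩
      linarith [h2 0, h2 1, h2 2]
    calc ∫ X in S, (CT βm βp F nbar p X) ^ 2
        ≤ ∫ X in S, (2 * p X ^ 2 + 6 * D ^ 2 * h ^ 2) := by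
          refine setIntegral_mono_on (hintc _ ?_) (hintc _ (by fun_prop)) hS fun X hX => ?_
          · rw [hCTe]; fun_prop
          · rw [hCTe]
            have := mul_le_mul_of_nonneg_left (hL X hX) (sq_nonneg D)
            nlinarith [sq_nonneg (p X - D * ⟪X - F, nbar⟫)]
      _ = 2 * I + volume.real S * (6 * D ^ 2 * h ^ 2) := by
          rw [integral_add (hintc _ (by fun_prop)) (hintc _ (by fun_prop)),
            integral_const_mul, setIntegral_const, smul_eq_mul]
      _ ≤ 2 * I + h ^ 3 * (6 * D ^ 2 * h ^ 2) := by gcongr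
      _ ≤ (2 + 72 * K) * I := by nlinarith
  · set I := ∫ X in S, ‖fderiv ℝ p X‖ ^ 2 with hI
    have hI0 : 0 ≤ I := integral_nonneg fun _ => sq_nonneg _
    refine key _ _ hI0 ?_
    have hfd : ∀ X, fderiv ℝ (CT βm βp F nbar p) X
        = fderiv ℝ p X + D • innerSL ℝ nbar := by
      intro X
      have h1 : HasFDerivAt (fun X : V3 => ⟪X - F, nbar⟫) (innerSL ℝ nbar) X := by
        have := (innerSL ℝ nbar).hasFDerivAt.comp X ((hasFDerivAt_id X).sub_const F)
        refine (this.congr_of_eventuallyEq (Filter.Eventually.of_forall fun Y => ?_))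
        simp [real_inner_comm]
      rw [hCTe]
      exact ((hgd X).differentiableAt.hasFDerivAt.add (h1.const_mul D)).fderiv
    have hcf : Continuous fun X => fderiv ℝ p X := by
      rw [show (fun X => fderiv ℝ p X) = fun X =>
        innerSL ℝ (WithLp.toLp 2 (fun i => g i X) : V3) from funext fun X => (hgd X).fderiv]
      fun_prop
    have hIs : I = ∑ i, ∫ X in S, g i X ^ 2 := by
      rw [hI]
      simp_rw [hnorm]
      exact integral_finsetSum _ fun i _ => hintc _ ((hcg i).pow 2)
    have hD3 : D ^ 2 * h ^ 3 ≤ K * I := by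
      calc D ^ 2 * h ^ 3 ≤ (∑ i, g i F ^ 2) * h ^ 3 := by gcongr
        _ = ∑ i, g i F ^ 2 * h ^ 3 := Finset.sum_mul _ _ _
        _ ≤ ∑ i, K * ∫ X in S, g i X ^ 2 := by
          refine Finset.sum_le_sum fun i _ => ?_
          obtain ⟨g', hg', -, -⟩ := (hgQ i).exists_grad
          exact pointwise_bound hγ0 hγ1 hh hS hSc hvol (hcg i) hg' hF
        _ = K * I := by rw [hIs, Finset.mul_sum]
    calc ∫ X in S, ‖fderiv ℝ (CT βm βp F nbar p) X‖ ^ 2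
        ≤ ∫ X in S, (2 * ‖fderiv ℝ p X‖ ^ 2 + 2 * D ^ 2) := by
          simp_rw [hfd]
          refine setIntegral_mono_on (hintc _ (by fun_prop)) (hintc _ (by fun_prop)) hS
            fun X hX => ?_
          have h1 : ‖fderiv ℝ p X + D • innerSL ℝ nbar‖ ≤ ‖fderiv ℝ p X‖ + |D| := by
            refine (norm_add_le _ _).trans (le_of_eq ?_)
            rw [norm_smul, innerSL_apply_norm, hn, mul_one, Real.norm_eq_abs]
          have h2 := pow_le_pow_left₀ (norm_nonneg _) h1 2
          rw [← sq_abs D]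
          nlinarith [sq_nonneg (‖fderiv ℝ p X‖ - |D|)]
      _ = 2 * I + volume.real S * (2 * D ^ 2) := by
          rw [integral_add (hintc _ (by fun_prop)) (hintc _ (by fun_prop)),
            integral_const_mul, setIntegral_const, smul_eq_mul]
      _ ≤ 2 * I + h ^ 3 * (2 * D ^ 2) := by gcongr
      _ ≤ (2 + 72 * K) * I := by nlinarith [mul_nonneg hK0.le hI0]
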